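/- arXiv:math/0610147 — 7 statements merged into one kernel-verified Lean document; each statement's English description precedes it below -/
import Mathlib

section
/- Let Q ⊆ ℝⁿ be a compact convex set containing 0 in its interior, and suppose that every extreme point of the dual set Q* lies in the lattice ℤⁿ (equivalently, Q* is the convex hull of a finite subset of ℤⁿ). Then the only point of ℤⁿ lying in the interior of Q is 0. -/
/-- The dual set `Q* = {v : ⟨v,u⟩ ≥ -1 for all u ∈ Q}` of a subset of `ℝⁿ`. -/
def dualSet (n : ℕ) (Q : Set (Fin n → ℝ)) : Set (Fin n → ℝ) :=
  {v | ∀ u ∈ Q, -1 ≤ ∑ i, v i * u i}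

/-- A point of `ℝⁿ` lies in the lattice `ℤⁿ`. -/
def IsLatticePoint {n : ℕ} (u : Fin n → ℝ) : Prop :=
  ∀ i, ∃ m : ℤ, u i = (m : ℝ)

/-!
Let `u` be a lattice point of `int Q`. Since `Q` contains a ball around `u`, the functional `⟨·, u⟩`
is `> -1` on `Q*` and coercive there, so it attains its minimum over `Q*`. The minimizers form a
compact face of `Q*`, which has an extreme point `v`. As `v` is a lattice point, `⟨v, u⟩` is an
integer `> -1`, so `⟨·, u⟩ ≥ 0` on all of `Q*`. But `Q` is bounded, so `Q*` contains `-t u` for some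
`t > 0`, and `0 ≤ ⟨-t u, u⟩` forces `u = 0`.
-/

open Set Matrix

theorem exists_mem_extremePoints_isMinOn {E : Type*} [AddCommGroup E] [Module ℝ E]
    [TopologicalSpace E] [T2Space E] [IsTopologicalAddGroup E] [ContinuousSMul ℝ E]
    [LocallyConvexSpace ℝ E] {s : Set E} {x : E} (f : StrongDual ℝ E) (hx : x ∈ s)
    (hs : IsCompact {y ∈ s | f y ≤ f x}) : ∃ v ∈ s.extremePoints ℝ, IsMinOn f s v := by
  obtain ⟨m, ⟨hms, hmx⟩, hmin⟩ := hs.exists_isMinOn ⟨x, hx, le_rfl⟩ f.continuous.continuousOn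
  have hm : ∀ y ∈ s, f m ≤ f y := fun y hy ↦
    (le_total (f y) (f x)).elim (fun h ↦ hmin ⟨hy, h⟩) hmx.trans
  let F := (-f).toExposed s
  have mem_F {y : E} : y ∈ F ↔ y ∈ s ∧ ∀ z ∈ s, f y ≤ f z := by
    simp [F, ContinuousLinearMap.toExposed]
  have hF_eq : F = {y ∈ s | f y ≤ f x} ∩ {y | f y ≤ f m} := by
    ext y
    rw [mem_F]
    exact ⟨fun ⟨hy, h⟩ ↦ ⟨⟨hy, h x hx⟩, h m hms⟩,
      fun ⟨⟨hy, _⟩, h⟩ ↦ ⟨hy, fun z hz ↦ le_trans h (hm z hz)⟩⟩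
  have hF_compact : IsCompact F :=
    hF_eq ▸ hs.inter_right (isClosed_le f.continuous continuous_const)
  obtain ⟨v, hv⟩ := hF_compact.extremePoints_nonempty ⟨m, mem_F.2 ⟨hms, hm⟩⟩
  have hF : IsExtreme ℝ s F := ContinuousLinearMap.toExposed.isExposed.isExtreme
  exact ⟨v, hF.extremePoints_subset_extremePoints hv, (mem_F.1 hv.1).2⟩

section

variable {n : ℕ} {Q : Set (Fin n → ℝ)} {u v : Fin n → ℝ}

theorem IsLatticePoint.exists_dotProduct_eq_intCast (hv : IsLatticePoint v)
    (hu : IsLatticePoint u) : ∃ m : ℤ, v ⬝ᵥ u = m := by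
  choose a ha using hv
  choose b hb using hu
  exact ⟨a ⬝ᵥ b, by simp [dotProduct, ha, hb]⟩

theorem mem_dualSet : v ∈ dualSet n Q ↔ ∀ w ∈ Q, -1 ≤ v ⬝ᵥ w := Iff.rfl

theorem zero_mem_dualSet : 0 ∈ dualSet n Q := by
  simp [mem_dualSet]

theorem isClosed_dualSet : IsClosed (dualSet n Q) := by
  have h : dualSet n Q = ⋂ w ∈ Q, {v | -1 ≤ v ⬝ᵥ w} := by
    ext v
    simp [mem_dualSet]
  exact h ▸ isClosed_biInter fun w _ ↦ isClosed_le (by fun_prop) (by fun_prop)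

theorem exists_neg_smul_mem_dualSet (hQ : Bornology.IsBounded Q) (u : Fin n → ℝ) :
    ∃ t > (0 : ℝ), -(t • u) ∈ dualSet n Q := by
  have hcont : Continuous fun w : Fin n → ℝ ↦ u ⬝ᵥ w := by fun_prop
  obtain ⟨C, hC_pos, hC⟩ : ∃ C > 0, ∀ w ∈ Q, u ⬝ᵥ w ≤ C := by
    obtain ⟨C, hC⟩ := hQ.isCompact_closure.bddAbove_image hcont.continuousOn
    exact ⟨max C 1, by positivity, fun w hw ↦
      le_max_of_le_left (hC (mem_image_of_mem _ (subset_closure hw)))⟩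
  refine ⟨C⁻¹, inv_pos.2 hC_pos, mem_dualSet.2 fun w hw ↦ ?_⟩
  rw [neg_dotProduct, smul_dotProduct, smul_eq_mul, neg_le_neg_iff]
  exact inv_mul_le_one_of_le₀ (hC w hw) hC_pos.le

theorem exists_mul_norm_le_dotProduct_add_one (hu : u ∈ interior Q) :
    ∃ ε > 0, ∀ v ∈ dualSet n Q, ε * ‖v‖ ≤ v ⬝ᵥ u + 1 := by
  obtain ⟨ε, hε, hball⟩ := Metric.nhds_basis_closedBall.mem_iff.1 (mem_interior_iff_mem_nhds.1 hu)
  refine ⟨ε, hε, fun v hv ↦ ?_⟩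
  have hshift {i : Fin n} {c : ℝ} (hc : |c| ≤ ε) : v i * c ≤ v ⬝ᵥ u + 1 := by
    have hmem : u - Pi.single i c ∈ Q := hball (by simpa [dist_eq_norm, Pi.norm_single] using hc)
    have h := mem_dualSet.1 hv _ hmem
    rw [dotProduct_sub, dotProduct_single] at h
    linarith
  have hu_nonneg : 0 ≤ v ⬝ᵥ u + 1 := by
    linarith [mem_dualSet.1 hv u (interior_subset hu)]
  rw [← le_div_iff₀' hε, pi_norm_le_iff_of_nonneg (by positivity)]
  intro i
  rw [le_div_iff₀' hε, Real.norm_eq_abs]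
  have hpos := hshift (i := i) (abs_of_pos hε).le
  have hneg := hshift (i := i) (c := -ε) (by rw [abs_neg, abs_of_pos hε])
  obtain h | h := abs_choice (v i) <;> rw [h] <;> linarith

theorem neg_one_lt_dotProduct_of_mem_dualSet (hu : u ∈ interior Q) (hv : v ∈ dualSet n Q) :
    -1 < v ⬝ᵥ u := by
  obtain ⟨ε, hε, h⟩ := exists_mul_norm_le_dotProduct_add_one hu
  obtain rfl | hv0 := eq_or_ne v 0
  · simp
  · have : 0 < ε * ‖v‖ := mul_pos hε (norm_pos_iff.2 hv0)
    linarith [h v hv]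

theorem isCompact_setOf_mem_dualSet_dotProduct_le (hu : u ∈ interior Q) (c : ℝ) :
    IsCompact {v ∈ dualSet n Q | v ⬝ᵥ u ≤ c} := by
  obtain ⟨ε, hε, h⟩ := exists_mul_norm_le_dotProduct_add_one hu
  have hclosed : IsClosed {v : Fin n → ℝ | v ⬝ᵥ u ≤ c} := isClosed_le (by fun_prop) (by fun_prop)
  refine Metric.isCompact_of_isClosed_isBounded (isClosed_dualSet.inter hclosed)
    (isBounded_iff_forall_norm_le.2 ⟨(c + 1) / ε, fun v ⟨hv, hvc⟩ ↦ ?_⟩)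
  rw [le_div_iff₀' hε]
  linarith [h v hv]

theorem exists_mem_extremePoints_dualSet_forall_dotProduct_le (hu : u ∈ interior Q) :
    ∃ v ∈ (dualSet n Q).extremePoints ℝ, ∀ w ∈ dualSet n Q, v ⬝ᵥ u ≤ w ⬝ᵥ u :=
  exists_mem_extremePoints_isMinOn ((dotProductBilin ℝ ℝ).flip u).toContinuousLinearMap
    zero_mem_dualSet (isCompact_setOf_mem_dualSet_dotProduct_le hu _)

theorem dotProduct_nonneg_of_mem_dualSet
    (hdual : ∀ w ∈ (dualSet n Q).extremePoints ℝ, IsLatticePoint w)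
    (hu : IsLatticePoint u) (huQ : u ∈ interior Q) (hv : v ∈ dualSet n Q) : 0 ≤ v ⬝ᵥ u := by
  obtain ⟨w, hw, hmin⟩ := exists_mem_extremePoints_dualSet_forall_dotProduct_le huQ
  obtain ⟨m, hm⟩ := (hdual w hw).exists_dotProduct_eq_intCast hu
  have hlt : (-1 : ℝ) < m := hm ▸ neg_one_lt_dotProduct_of_mem_dualSet huQ hw.1
  have hm_nonneg : 0 ≤ m := Int.lt_iff_add_one_le.1 (by exact_mod_cast hlt)
  calc (0 : ℝ) ≤ m := by exact_mod_cast hm_nonneg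
    _ = w ⬝ᵥ u := hm.symm
    _ ≤ v ⬝ᵥ u := hmin v hv

end

theorem stmt0_general (n : ℕ) (Q : Set (Fin n → ℝ)) (hQ : Bornology.IsBounded Q)
    (hdual : ∀ v ∈ Set.extremePoints ℝ (dualSet n Q), IsLatticePoint v) :
    ∀ u : Fin n → ℝ, IsLatticePoint u → u ∈ interior Q → u = 0 := by
  intro u hu huQ
  obtain ⟨t, ht, hmem⟩ := exists_neg_smul_mem_dualSet hQ u
  have h : t * (u ⬝ᵥ u) ≤ 0 := by
    simpa using dotProduct_nonneg_of_mem_dualSet hdual hu huQ hmem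
  have hself : u ⬝ᵥ u = 0 :=
    le_antisymm (nonpos_of_mul_nonpos_right h ht) (Finset.sum_nonneg fun i _ ↦ mul_self_nonneg _)
  exact dotProduct_self_eq_zero.1 hself

/-- If `Q ⊆ ℝⁿ` is a compact convex set containing `0` in its interior and every
extreme point of the dual set `Q*` lies in `ℤⁿ`, then the only point of `ℤⁿ` in the
interior of `Q` is `0`. -/
theorem stmt0 (n : ℕ) (hn : 1 ≤ n) (Q : Set (Fin n → ℝ))
    (hQcomp : IsCompact Q) (hQconv : Convex ℝ Q)
    (h0 : (0 : Fin n → ℝ) ∈ interior Q)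
    (hdual : ∀ v ∈ Set.extremePoints ℝ (dualSet n Q), IsLatticePoint v) :
    ∀ u : Fin n → ℝ, IsLatticePoint u → u ∈ interior Q → u = 0 :=
  stmt0_general n Q hQcomp.isBounded hdual
end

section
/- Let a be a positive integer and let Q = conv(S) ⊆ ℝⁿ be a polytope containing 0 in its interior, where S is a finite set each of whose points lies in (1/k)ℤⁿ for some integer k with 1 ≤ k ≤ a. Then the interior of the scaled dual set (1/a)·Q* contains no point of ℤⁿ other than 0; equivalently, for every nonzero v ∈ ℤⁿ there exists u ∈ Q with ⟨v,u⟩ ≤ −1/a. -/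
/-!
A nonzero continuous functional `f` is an open map, so at an interior point of `conv S` it does not
attain its minimum over `conv S`, and some point of `S` has a strictly smaller value. Take
`f = ⟨v, ·⟩` and the interior point `0`: some `u ∈ S` has `⟨v, u⟩ < 0`. Since `v ∈ ℤⁿ` and
`u ∈ (1/k)ℤⁿ`, the number `⟨v, u⟩` is a negative integer divided by `k`, hence at most
`-1/k ≤ -1/a`.
-/

theorem exists_sum_mul_eq_intCast_div {ι K : Type*} [Fintype ι] [DivisionRing K] {k : K}
    {v u : ι → K} (hv : ∀ i, ∃ m : ℤ, v i = m) (hu : ∀ i, ∃ m : ℤ, u i = m / k) :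
    ∃ m : ℤ, ∑ i, v i * u i = m / k := by
  choose p hp using hv
  choose q hq using hu
  refine ⟨∑ i, p i * q i, ?_⟩
  simp only [hp, hq, Int.cast_sum, Int.cast_mul, Finset.sum_div, mul_div_assoc]

section OrderedField

variable {K : Type*} [Field K] [LinearOrder K] [IsStrictOrderedRing K]

theorem intCast_div_le_neg_one_div {m : ℤ} {k a : K} (hk : 0 < k) (hka : k ≤ a)
    (hneg : (m : K) / k < 0) : (m : K) / k ≤ -1 / a := by
  have hm_neg : m < 0 := by
    rwa [div_lt_iff₀ hk, zero_mul, Int.cast_lt_zero] at hneg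
  have hm_le : (m : K) ≤ -1 := by exact_mod_cast Int.le_sub_one_of_lt hm_neg
  calc (m : K) / k ≤ -1 / k := by gcongr
    _ ≤ -1 / a := by
      rw [neg_div, neg_div]
      gcongr

variable [TopologicalSpace K] [OrderTopology K]
  {E : Type*} [AddCommGroup E] [Module K E] [TopologicalSpace E] [ContinuousAdd E]
  [ContinuousSMul K E] {f : StrongDual K E} {S : Set E}

theorem exists_lt_of_mem_interior_convexHull {x : E} (hf : f ≠ 0)
    (hx : x ∈ interior (convexHull K S)) : ∃ u ∈ S, f u < f x := by
  by_contra! hmin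
  have hsub : convexHull K S ⊆ f ⁻¹' Set.Ici (f x) :=
    convexHull_min hmin ((convex_Ici (f x)).linear_preimage f.toLinearMap)
  have hfx : f x ∈ interior (Set.Ici (f x)) :=
    (f.isOpenMap_of_ne_zero hf).interior_preimage_subset_preimage_interior
      (interior_mono hsub hx)
  rw [interior_Ici] at hfx
  exact lt_irrefl (f x) hfx

theorem exists_le_neg_one_div_of_zero_mem_interior_convexHull {a : K} (hf : f ≠ 0)
    (hS : ∀ u ∈ S, ∃ k : K, 0 < k ∧ k ≤ a ∧ ∃ m : ℤ, f u = m / k)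
    (h0 : 0 ∈ interior (convexHull K S)) : ∃ u ∈ S, f u ≤ -1 / a := by
  obtain ⟨u, hu, hneg⟩ := exists_lt_of_mem_interior_convexHull hf h0
  obtain ⟨k, hk, hka, m, hm⟩ := hS u hu
  rw [map_zero, hm] at hneg
  exact ⟨u, hu, hm.trans_le (intCast_div_le_neg_one_div hk hka hneg)⟩

end OrderedField

theorem stmt1_general {ι : Type*} [Fintype ι] {a : ℕ} {S : Set (ι → ℝ)}
    (hS : ∀ u ∈ S, ∃ k : ℕ, 1 ≤ k ∧ k ≤ a ∧ ∀ i, ∃ m : ℤ, u i = (m : ℝ) / (k : ℝ))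
    (h0 : (0 : ι → ℝ) ∈ interior (convexHull ℝ S))
    {v : ι → ℝ} (hv : ∀ i, ∃ m : ℤ, v i = (m : ℝ)) (hv0 : v ≠ 0) :
    ∃ u ∈ S, ∑ i, v i * u i ≤ -1 / (a : ℝ) := by
  let f : StrongDual ℝ (ι → ℝ) := (dotProductBilin ℝ ℝ v).toContinuousLinearMap
  have hf : f ≠ 0 := fun h => hv0 (dotProduct_self_eq_zero.mp (DFunLike.congr_fun h v))
  refine exists_le_neg_one_div_of_zero_mem_interior_convexHull (f := f) hf (fun u hu => ?_) h0
  obtain ⟨k, hk, hka, hku⟩ := hS u hu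
  exact ⟨k, by exact_mod_cast hk, by exact_mod_cast hka, exists_sum_mul_eq_intCast_div hv hku⟩

/-- Let `a ≥ 1` and let `Q = conv S ⊆ ℝⁿ` be a polytope containing `0` in its
interior, where each point of the finite set `S` lies in `(1/k)ℤⁿ` for some integer
`1 ≤ k ≤ a`.  Then for every nonzero `v ∈ ℤⁿ` there is `u ∈ Q` with `⟨v,u⟩ ≤ -1/a`;
equivalently, the interior of `(1/a)·Q*` contains no point of `ℤⁿ` other than `0`. -/
theorem stmt1 (n : ℕ) (hn : 1 ≤ n) (a : ℕ) (ha : 0 < a)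
    (S : Set (Fin n → ℝ)) (hSfin : S.Finite)
    (hSlat : ∀ u ∈ S, ∃ k : ℕ, 1 ≤ k ∧ k ≤ a ∧ ∀ i, ∃ m : ℤ, u i = (m : ℝ) / (k : ℝ))
    (h0 : (0 : Fin n → ℝ) ∈ interior (convexHull ℝ S)) :
    ∀ v : Fin n → ℝ, IsLatticePoint v → v ≠ 0 →
      ∃ u ∈ convexHull ℝ S, ∑ i, v i * u i ≤ -1 / (a : ℝ) := by
  exact fun _ hv hv0 => (stmt1_general hSlat h0 hv hv0).imp
    fun _ ⟨hu, hle⟩ => ⟨subset_convexHull ℝ S hu, hle⟩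
end

section
/- Let a be a positive integer and let Q = conv(S) ⊆ ℝⁿ be a polytope containing 0 in its interior, where S is a finite set each of whose points lies in (1/k)ℤⁿ for some integer k with 1 ≤ k ≤ a. Let b > 0 be a real number such that ⟨v,u⟩ ≤ b for all u ∈ Q and all v ∈ Q*. Then the volume of Q* satisfies vol(Q*) ≤ ((b+1)·a)ⁿ. -/
/-!
Since `conv S` has interior points, `S` contains a basis of `ℝⁿ`. The `n` linear forms `⟨·, u⟩`
attached to it map the dual set into the cube `[-1, b]ⁿ`, so its volume is at most
`(b + 1)ⁿ / |det A|`, where the rows of `A` are the basis vectors. Clearing denominators turns `A`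
into a nonsingular integer matrix by multiplying its determinant by at most `aⁿ`, whence
`1 / |det A| ≤ aⁿ`.
-/

section

open MeasureTheory Module

variable {ι : Type*}

/-- The point `u` lies in `(1/k) ℤ^ι` for some integer `1 ≤ k ≤ a`; the denominator `k` is common to
all coordinates and may depend on `u`. -/
def HasCommonDenomLE {K : Type*} [DivisionRing K] (a : ℕ) (u : ι → K) : Prop :=
  ∃ k : ℕ, 1 ≤ k ∧ k ≤ a ∧ ∀ i, ∃ m : ℤ, u i = (m : K) / (k : K)

theorem exists_basis_forall_mem_of_span_eq_top {K E : Type*} [DivisionRing K] [AddCommGroup E]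
    [Module K E] (e : Basis ι K E) {S : Set E} (hS : Submodule.span K S = ⊤) :
    ∃ f : Basis ι K E, ∀ i, f i ∈ S := by
  let f := Basis.ofSpan hS.ge
  refine ⟨f.reindex (f.indexEquiv e), fun i => ?_⟩
  rw [Basis.reindex_apply]
  exact Basis.ofSpan_subset hS.ge (Set.mem_range_self _)

theorem span_eq_top_of_nonempty_interior_convexHull {E : Type*} [AddCommGroup E] [Module ℝ E]
    [TopologicalSpace E] [ContinuousAdd E] [ContinuousSMul ℝ E] {S : Set E}
    (hS : (interior (convexHull ℝ S)).Nonempty) : Submodule.span ℝ S = ⊤ :=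
  Submodule.eq_top_of_nonempty_interior' _ <| hS.mono <| interior_mono <|
    convexHull_min Submodule.subset_span (Submodule.convex _)

variable [Fintype ι]

section Determinant

variable [DecidableEq ι] {K : Type*} [Field K] [LinearOrder K] [IsStrictOrderedRing K]

theorem one_le_abs_det_of_forall_eq_intCast {A : Matrix ι ι K} (hA : A.det ≠ 0)
    (hint : ∀ i j, ∃ m : ℤ, A i j = m) : 1 ≤ |A.det| := by
  choose m hm using hint
  have hdet : A.det = ((Matrix.of m).det : ℤ) := by
    rw [Int.cast_det]
    exact congrArg Matrix.det (Matrix.ext hm)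
  rw [hdet] at hA ⊢
  exact_mod_cast Int.one_le_abs (Int.cast_ne_zero.mp hA)

theorem one_le_pow_mul_abs_det_of_hasCommonDenomLE {a : ℕ} {A : Matrix ι ι K}
    (hA : A.det ≠ 0) (hrow : ∀ i, HasCommonDenomLE a (A i)) :
    1 ≤ (a : K) ^ Fintype.card ι * |A.det| := by
  choose k hk_pos hk_le hk using hrow
  have hk0 (i : ι) : (k i : K) ≠ 0 := Nat.cast_ne_zero.mpr (Nat.one_le_iff_ne_zero.mp (hk_pos i))
  have hint (i j : ι) : ∃ m : ℤ, Matrix.of (fun i j => (k i : K) * A i j) i j = m := by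
    obtain ⟨m, hm⟩ := hk i j
    exact ⟨m, by rw [Matrix.of_apply, hm, mul_div_cancel₀ _ (hk0 i)]⟩
  have hscaled := Matrix.det_mul_column (fun i => (k i : K)) A
  have hprod : ∏ i, (k i : K) ≤ (a : K) ^ Fintype.card ι :=
    mod_cast Finset.prod_le_pow_card Finset.univ k a fun i _ => hk_le i
  calc
    1 ≤ |(Matrix.of fun i j => (k i : K) * A i j).det| :=
      one_le_abs_det_of_forall_eq_intCast
        (hscaled ▸ mul_ne_zero (Finset.prod_ne_zero_iff.mpr fun i _ => hk0 i) hA) hint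
    _ = (∏ i, (k i : K)) * |A.det| := by
      rw [hscaled, abs_mul, abs_of_nonneg (Finset.prod_nonneg fun i _ => Nat.cast_nonneg _)]
    _ ≤ (a : K) ^ Fintype.card ι * |A.det| := by gcongr

end Determinant

theorem volume_le_of_mapsTo_mulVec [DecidableEq ι] {A : Matrix ι ι ℝ} (hA : A.det ≠ 0)
    {V W : Set (ι → ℝ)} (h : Set.MapsTo A.mulVec V W) :
    volume V ≤ ENNReal.ofReal |A.det⁻¹| * volume W := by
  have hdet : A.toLin'.det ≠ 0 := by rwa [LinearMap.det_toLin']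
  calc
    volume V ≤ volume (A.toLin' ⁻¹' W) := measure_mono h
    _ = ENNReal.ofReal |A.det⁻¹| * volume W := by
      rw [Measure.addHaar_preimage_linearMap _ hdet, LinearMap.det_toLin']

theorem stmt2_general (a : ℕ) (S : Set (ι → ℝ)) (hlat : ∀ u ∈ S, HasCommonDenomLE a u)
    (hspan : Submodule.span ℝ S = ⊤) (c d : ℝ) (V : Set (ι → ℝ))
    (hV : ∀ u ∈ S, ∀ v ∈ V, v ⬝ᵥ u ∈ Set.Icc c d) :
    volume V ≤ (ENNReal.ofReal (d - c) * a) ^ Fintype.card ι := by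
  classical
  obtain ⟨f, hfS⟩ := exists_basis_forall_mem_of_span_eq_top (Pi.basisFun ℝ ι) hspan
  let A : Matrix ι ι ℝ := Matrix.of f
  have hdet : A.det ≠ 0 := ((Matrix.isUnit_iff_isUnit_det A).mp
    (Matrix.linearIndependent_rows_iff_isUnit.mp f.linearIndependent)).ne_zero
  have hinv : |A.det⁻¹| ≤ (a : ℝ) ^ Fintype.card ι := by
    rw [abs_inv, inv_le_iff_one_le_mul₀ (abs_pos.mpr hdet)]
    exact one_le_pow_mul_abs_det_of_hasCommonDenomLE hdet fun i => hlat _ (hfS i)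
  have hcube : Set.MapsTo A.mulVec V (Set.Icc (fun _ => c) (fun _ => d)) := by
    intro v hv
    have hmem (i : ι) : A.mulVec v i ∈ Set.Icc c d := by
      rw [Matrix.mulVec, dotProduct_comm]
      exact hV _ (hfS i) v hv
    exact ⟨fun i => (hmem i).1, fun i => (hmem i).2⟩
  calc
    volume V ≤ ENNReal.ofReal |A.det⁻¹| * volume (Set.Icc (fun _ : ι => c) (fun _ => d)) :=
      volume_le_of_mapsTo_mulVec hdet hcube
    _ = ENNReal.ofReal |A.det⁻¹| * ENNReal.ofReal (d - c) ^ Fintype.card ι := by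
      rw [Real.volume_Icc_pi, Finset.prod_const, Finset.card_univ]
    _ ≤ ENNReal.ofReal ((a : ℝ) ^ Fintype.card ι) * ENNReal.ofReal (d - c) ^ Fintype.card ι := by
      gcongr
    _ = (ENNReal.ofReal (d - c) * a) ^ Fintype.card ι := by
      rw [ENNReal.ofReal_pow a.cast_nonneg, ENNReal.ofReal_natCast, mul_pow, mul_comm]

end

/-- Let `a ≥ 1` and let `Q = conv S ⊆ ℝⁿ` be a polytope containing `0` in its
interior, where each point of the finite set `S` lies in `(1/k)ℤⁿ` for some integer
`1 ≤ k ≤ a`.  If `b > 0` is such that `⟨v,u⟩ ≤ b` for all `u ∈ Q` and `v ∈ Q*`,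
then `vol(Q*) ≤ ((b+1)·a)ⁿ`. -/
theorem stmt2 (n : ℕ) (hn : 1 ≤ n) (a : ℕ) (ha : 0 < a)
    (S : Set (Fin n → ℝ)) (hSfin : S.Finite)
    (hSlat : ∀ u ∈ S, ∃ k : ℕ, 1 ≤ k ∧ k ≤ a ∧ ∀ i, ∃ m : ℤ, u i = (m : ℝ) / (k : ℝ))
    (h0 : (0 : Fin n → ℝ) ∈ interior (convexHull ℝ S))
    (b : ℝ) (hb : 0 < b)
    (hbnd : ∀ u ∈ convexHull ℝ S, ∀ v ∈ dualSet n (convexHull ℝ S),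
      ∑ i, v i * u i ≤ b) :
    MeasureTheory.volume (dualSet n (convexHull ℝ S)) ≤
      ENNReal.ofReal (((b + 1) * (a : ℝ)) ^ n) := by
  rw [ENNReal.ofReal_pow (by positivity), ENNReal.ofReal_mul (by positivity),
    ENNReal.ofReal_natCast]
  simpa only [sub_neg_eq_add, Fintype.card_fin] using
    stmt2_general a S hSlat (span_eq_top_of_nonempty_interior_convexHull ⟨0, h0⟩) (-1) b
      (dualSet n (convexHull ℝ S)) fun u hu v hv =>
        ⟨hv u (subset_convexHull ℝ S hu), hbnd u (subset_convexHull ℝ S hu) v hv⟩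
end

section
/- Let n ≥ 1, let e₁,…,e_{n+1} ∈ ℝⁿ and let a₁,…,a_{n+1} be positive integers such that Σ_{i=1}^{n+1} a_i·e_i = 0 and such that for each i, the family (a_j·e_j)_{j≠i} is a ℤ-basis of the lattice ℤⁿ. Let Q be the convex hull of {e₁,…,e_{n+1}} (which contains 0 in its interior). Then vol(Q*) ≤ ((a₁+⋯+a_{n+1}) · max_i a_i)ⁿ. -/
/-!
For `v` in the dual set put `xᵢ = ⟨aᵢ eᵢ, v⟩`. Duality gives `xᵢ ≥ -aᵢ`, and `∑ xᵢ = 0` turns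
these lower bounds into upper bounds `xᵢ ≤ ∑ aⱼ - aᵢ`. Hence the matrix with rows `aᵢ eᵢ`, for
`n` chosen indices `i`, maps the dual set into a cube of side `∑ aⱼ`. In the lattice case this
matrix has determinant `±1`, so it preserves volume.
-/

section

open MeasureTheory Matrix

theorem abs_det_map_intCast_eq_one {m K : Type*} [Fintype m] [DecidableEq m] [CommRing K]
    [LinearOrder K] [IsStrictOrderedRing K] {M : Matrix m m ℤ} (hM : IsUnit M.det) :
    |(M.map ((↑) : ℤ → K)).det| = 1 := by
  rw [← Int.cast_det, ← Int.cast_abs, Int.isUnit_iff_abs_eq.mp hM, Int.cast_one]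

theorem le_sum_sub_of_neg_le_of_sum_eq_zero {ι G : Type*} [Fintype ι] [AddCommGroup G]
    [PartialOrder G] [IsOrderedAddMonoid G] {a x : ι → G} (hax : ∀ i, -a i ≤ x i)
    (hx : ∑ i, x i = 0) (i : ι) : x i ≤ ∑ j, a j - a i := by
  have hnonneg (j : ι) : 0 ≤ x j + a j := neg_le_iff_add_nonneg.mp (hax j)
  rw [le_sub_iff_add_le]
  calc x i + a i ≤ ∑ j, (x j + a j) :=
        Finset.single_le_sum (fun j _ ↦ hnonneg j) (Finset.mem_univ i)
    _ = ∑ j, a j := by rw [Finset.sum_add_distrib, hx, zero_add]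

theorem volume_preimage_mulVec_Icc {m : Type*} [Fintype m] [DecidableEq m] {R : Matrix m m ℝ}
    (hR : R.det ≠ 0) (l u : m → ℝ) :
    volume (R.mulVec ⁻¹' Set.Icc l u) =
      ENNReal.ofReal |R.det|⁻¹ * ∏ k, ENNReal.ofReal (u k - l k) := by
  have hlin : LinearMap.det (toLin' R) ≠ 0 := by rwa [LinearMap.det_toLin']
  rw [← Real.volume_Icc_pi, ← abs_inv, ← LinearMap.det_toLin' R]
  exact Measure.addHaar_preimage_linearMap volume hlin (Set.Icc l u)

variable {ι : Type*} {n : ℕ} {Q : Set (Fin n → ℝ)} {e : ι → Fin n → ℝ} {a : ι → ℝ}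

theorem neg_le_smul_dotProduct_of_mem_dualSet {v u : Fin n → ℝ} (hv : v ∈ dualSet n Q)
    (hu : u ∈ Q) {c : ℝ} (hc : 0 ≤ c) : -c ≤ (c • u) ⬝ᵥ v := by
  have hdual : -1 ≤ u ⬝ᵥ v := dotProduct_comm v u ▸ hv u hu
  calc -c = c * -1 := (mul_neg_one c).symm
    _ ≤ c * (u ⬝ᵥ v) := mul_le_mul_of_nonneg_left hdual hc
    _ = (c • u) ⬝ᵥ v := (smul_dotProduct c u v).symm

theorem smul_dotProduct_mem_Icc_of_mem_dualSet [Fintype ι] (he : ∀ i, e i ∈ Q)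
    (ha : ∀ i, 0 ≤ a i) (hsum : ∑ i, a i • e i = 0) {v : Fin n → ℝ} (hv : v ∈ dualSet n Q)
    (i : ι) : (a i • e i) ⬝ᵥ v ∈ Set.Icc (-a i) (∑ j, a j - a i) := by
  have hlower (j : ι) : -a j ≤ (a j • e j) ⬝ᵥ v :=
    neg_le_smul_dotProduct_of_mem_dualSet hv (he j) (ha j)
  have hzero : ∑ j, (a j • e j) ⬝ᵥ v = 0 := by rw [← sum_dotProduct, hsum, zero_dotProduct]
  exact ⟨hlower i, le_sum_sub_of_neg_le_of_sum_eq_zero hlower hzero i⟩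

theorem stmt5_general [Fintype ι] (he : ∀ i, e i ∈ Q) (ha : ∀ i, 0 ≤ a i)
    (hsum : ∑ i, a i • e i = 0) {R : Matrix (Fin n) (Fin n) ℝ} {f : Fin n → ι}
    (hR : ∀ k, R k = a (f k) • e (f k)) (hdet : R.det ≠ 0) :
    volume (dualSet n Q) ≤ ENNReal.ofReal ((∑ i, a i) ^ n / |R.det|) := by
  set S := ∑ i, a i
  let l (k : Fin n) : ℝ := -a (f k)
  let u (k : Fin n) : ℝ := S - a (f k)
  have hsub : dualSet n Q ⊆ R.mulVec ⁻¹' Set.Icc l u := by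
    intro v hv
    have hmem (k : Fin n) : R k ⬝ᵥ v ∈ Set.Icc (l k) (u k) :=
      hR k ▸ smul_dotProduct_mem_Icc_of_mem_dualSet he ha hsum hv (f k)
    exact ⟨fun k ↦ (hmem k).1, fun k ↦ (hmem k).2⟩
  have hside (k : Fin n) : u k - l k = S := by simp only [u, l]; ring
  have hS : 0 ≤ S := Finset.sum_nonneg fun i _ ↦ ha i
  calc volume (dualSet n Q) ≤ volume (R.mulVec ⁻¹' Set.Icc l u) := measure_mono hsub
    _ = ENNReal.ofReal |R.det|⁻¹ * ENNReal.ofReal S ^ n := by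
        simp only [volume_preimage_mulVec_Icc hdet, hside, Finset.prod_const, Finset.card_univ,
          Fintype.card_fin]
    _ = ENNReal.ofReal (S ^ n / |R.det|) := by
        rw [← ENNReal.ofReal_pow hS, ← ENNReal.ofReal_mul (by positivity), inv_mul_eq_div]

theorem volume_dualSet_le_of_isUnit_det [Fintype ι] (he : ∀ i, e i ∈ Q) (ha : ∀ i, 0 ≤ a i)
    (hsum : ∑ i, a i • e i = 0) {M : Matrix (Fin n) (Fin n) ℤ} {f : Fin n → ι}
    (hM : ∀ k j, (M k j : ℝ) = a (f k) * e (f k) j) (hdet : IsUnit M.det) :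
    volume (dualSet n Q) ≤ ENNReal.ofReal ((∑ i, a i) ^ n) := by
  let R : Matrix (Fin n) (Fin n) ℝ := M.map (↑)
  have habs : |R.det| = 1 := abs_det_map_intCast_eq_one hdet
  have hne : R.det ≠ 0 := abs_pos.mp (habs ▸ one_pos)
  have hR (k : Fin n) : R k = a (f k) • e (f k) := funext (hM k)
  simpa only [habs, div_one] using stmt5_general he ha hsum hR hne

end

/-- Proposition 4.5, simplex case `r = 1`.  Let `e₁,…,e_{n+1} ∈ ℝⁿ` and positive
integers `a₁,…,a_{n+1}` with `Σ aᵢ eᵢ = 0` such that for each `i` the family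
`(aⱼ eⱼ)_{j ≠ i}` is a `ℤ`-basis of `ℤⁿ`.  If `Q = conv{e₁,…,e_{n+1}}`, then
`vol(Q*) ≤ ((a₁ + ⋯ + a_{n+1}) · maxᵢ aᵢ)ⁿ`. -/
theorem stmt5 (n : ℕ) (hn : 1 ≤ n)
    (e : Fin (n + 1) → (Fin n → ℝ)) (a : Fin (n + 1) → ℤ)
    (hapos : ∀ i, 0 < a i)
    (hsum : ∑ i, (a i : ℝ) • e i = 0)
    (hbasis : ∀ i : Fin (n + 1), ∃ M : Matrix (Fin n) (Fin n) ℤ,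
      (∀ k j, ((M k j : ℤ) : ℝ) = (a (i.succAbove k) : ℝ) * e (i.succAbove k) j) ∧
        IsUnit M.det)
    (A : ℤ) (hA : IsGreatest (Set.range a) A) :
    MeasureTheory.volume (dualSet n (convexHull ℝ (Set.range e))) ≤
      ENNReal.ofReal (((∑ i, (a i : ℝ)) * (A : ℝ)) ^ n) := by
  obtain ⟨M, hM, hdet⟩ := hbasis 0
  have ha (i : Fin (n + 1)) : (0 : ℝ) ≤ a i := by exact_mod_cast (hapos i).le
  have hA_one : (1 : ℝ) ≤ A := by exact_mod_cast (hapos 0).trans_le (hA.2 ⟨0, rfl⟩)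
  have hS : (0 : ℝ) ≤ ∑ i, (a i : ℝ) := Finset.sum_nonneg fun i _ ↦ ha i
  have he (i : Fin (n + 1)) : e i ∈ convexHull ℝ (Set.range e) :=
    subset_convexHull ℝ _ (Set.mem_range_self i)
  exact (volume_dualSet_le_of_isUnit_det he ha hsum hM hdet).trans <|
    ENNReal.ofReal_le_ofReal (pow_le_pow_left₀ hS (le_mul_of_one_le_right hS hA_one) n)
end

section
/- Let R be a finite reduced crystallographic root system with base (set of simple roots) S, set of positive roots R⁺, and integer pairings ⟨β, α̌⟩ between roots β and coroots α̌. For a subset I ⊆ S, let R_I⁺ denote the set of positive roots that are integer linear combinations of elements of I. Then for every subset I ⊆ S: Σ_{α ∈ S∖I} Σ_{β ∈ R⁺∖R_I⁺} ⟨β, α̌⟩ ≤ #(S∖I) + #(R⁺∖R_I⁺). Equivalently, setting a_α = ⟨Σ_{β ∈ R⁺∖R_I⁺} β, α̌⟩ for α ∈ S∖I, one has Σ_{α∈S∖I}(a_α − 1) ≤ #(R⁺∖R_I⁺). -/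
/-- The pairing `⟨β, α̌⟩ = 2⟨β,α⟩/⟨α,α⟩` of a vector with the coroot of `α`,
for the standard inner product on `ℝⁿ`. -/
noncomputable def corootPairing (n : ℕ) (β α : Fin n → ℝ) : ℝ :=
  2 * (∑ i, β i * α i) / (∑ i, α i * α i)

/-!
For a simple root `α`, the reflection `s_α` permutes `R⁺ ∖ {α}` and negates `⟨·, α̌⟩`, so
`∑ β ∈ R⁺, ⟨β, α̌⟩ = 2`. Hence `a_α - 1 = 1 - ∑ β ∈ R_I⁺, ⟨β, α̌⟩` for `α ∉ I`. For `β ∈ R_I⁺`, the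
number `-⟨β, α̌⟩` is at most the number of roots `β + mα` with `m > 0`. All these roots, together
with `α` itself, are distinct elements of `R_{I ∪ {α}}⁺ ∖ R_I⁺`, so `a_α - 1` is at most the
cardinality of that set. As `α` runs over `S ∖ I`, these sets are disjoint subsets of `R⁺ ∖ R_I⁺`.
-/

open Finset Module Submodule

section RootPairing

variable {ι R M N : Type*} [CommRing R] [CharZero R] [AddCommGroup M] [Module R M]
  [AddCommGroup N] [Module R N] {P : RootPairing ι R M N}

section UpperString

variable [Fintype ι]

open Classical in
/-- The indices of the roots lying strictly above `j` in the `i`-string through `j`. -/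
noncomputable def upperString (P : RootPairing ι R M N) (i j : ι) : Finset ι :=
  {k | ∃ m : ℕ, 0 < m ∧ P.root k = P.root j + m • P.root i}

omit [CharZero R] in
lemma mem_upperString {i j k : ι} :
    k ∈ upperString P i j ↔ ∃ m : ℕ, 0 < m ∧ P.root k = P.root j + m • P.root i := by
  simp only [upperString, mem_filter_univ]

variable [IsDomain R] [P.IsCrystallographic] {i j : ι}

lemma card_upperString (hij : LinearIndependent R ![P.root i, P.root j]) :
    #(upperString P i j) = P.chainTopCoeff i j := by
  classical
  have : IsReflexive R M := .of_isPerfPair P.toLinearMap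
  have hinj : Function.Injective fun m : ℕ ↦ P.root j + m • P.root i := fun m m' h ↦ by
    simpa only [add_right_inj, ← Nat.cast_smul_eq_nsmul R,
      (smul_left_injective R (P.ne_zero i)).eq_iff, Nat.cast_inj] using h
  have himage : (upperString P i j).map P.root =
      (Icc 1 (P.chainTopCoeff i j)).image fun m ↦ P.root j + m • P.root i := by
    ext x
    simp only [Finset.mem_map, mem_upperString, mem_image, mem_Icc,
      ← P.root_add_nsmul_mem_range_iff_le_chainTopCoeff hij]
    constructor
    · rintro ⟨k, ⟨m, hm, hk⟩, rfl⟩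
      exact ⟨m, ⟨hm, k, hk⟩, hk.symm⟩
    · rintro ⟨m, ⟨hm, k, hk⟩, rfl⟩
      exact ⟨k, ⟨m, hm, hk⟩, hk⟩
  rw [← card_map P.root, himage, card_image_of_injective _ hinj, Nat.card_Icc, Nat.add_sub_cancel]

lemma neg_pairingIn_le_card_upperString (hij : LinearIndependent R ![P.root i, P.root j]) :
    -P.pairingIn ℤ j i ≤ #(upperString P i j) := by
  rw [card_upperString hij, ← P.chainBotCoeff_sub_chainTopCoeff hij]
  lia

end UpperString

section SimpleRoots

variable (b : P.Base) {I : Finset ι} {i : ι}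

lemma eq_zero_of_zsmul_root_mem_span (hI : I ⊆ b.support) (hi : i ∈ b.support) (hiI : i ∉ I)
    {z : ℤ} (hz : z • P.root i ∈ span ℤ (P.root '' I)) : z = 0 := by
  have hli : LinearIndepOn ℤ P.root b.support := b.linearIndepOn_root.restrict_scalars' ℤ
  exact hli.eq_zero_of_smul_mem_span hi z <| span_mono
    (Set.image_mono <| Set.subset_sdiff_singleton (coe_subset.2 hI) hiI) hz

lemma root_notMem_span (hI : I ⊆ b.support) (hi : i ∈ b.support) (hiI : i ∉ I) :
    P.root i ∉ span ℤ (P.root '' I) := fun h ↦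
  one_ne_zero (eq_zero_of_zsmul_root_mem_span b hI hi hiI (by rwa [one_zsmul]))

end SimpleRoots

section IsPos

variable {b : P.Base} {i : ι}

lemma isPos_of_root_mem_span (hi : P.root i ∈ span ℕ (P.root '' b.support)) : b.IsPos i := by
  obtain ⟨c, hc⟩ := (mem_span_image_finset_iff_exists_fun' ℕ).1 hi
  rw [b.isPos_iff', b.height_eq_sum (f := fun j ↦ c j) (by simp only [← hc, natCast_zsmul])]
  exact sum_nonneg fun j _ ↦ Int.natCast_nonneg (c j)

lemma isPos_iff_root_mem_span : b.IsPos i ↔ P.root i ∈ span ℕ (P.root '' b.support) := by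
  refine ⟨fun hi ↦ ?_, isPos_of_root_mem_span⟩
  rw [← mem_toAddSubmonoid, span_nat_eq_addSubmonoidClosure]
  refine (b.root_mem_or_neg_mem i).resolve_right fun hneg ↦ ?_
  let := P.indexNeg
  refine (RootPairing.Base.IsPos.neg_iff_not b i).1 (isPos_of_root_mem_span ?_) hi
  rwa [← mem_toAddSubmonoid, span_nat_eq_addSubmonoidClosure, P.indexNeg_neg,
    P.root_reflectionPerm, P.reflection_apply_self]

end IsPos

section PositiveRoots

variable [Fintype ι]

open Classical in
/-- The indices of the roots that are positive with respect to the base `b`. -/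
noncomputable def posRoots (b : P.Base) : Finset ι := {i | b.IsPos i}

open Classical in
/-- The indices of the positive roots `R_I⁺` of the Levi subsystem attached to a set `I` of
simple roots: the positive roots lying in the integer span of `I`. -/
noncomputable def leviPosRoots (b : P.Base) (I : Finset ι) : Finset ι :=
  {i ∈ posRoots b | P.root i ∈ span ℤ (P.root '' I)}

variable {b : P.Base} {I : Finset ι} {i j : ι}

lemma mem_posRoots : i ∈ posRoots b ↔ b.IsPos i := by
  simp only [posRoots, mem_filter_univ]

lemma mem_leviPosRoots :
    i ∈ leviPosRoots b I ↔ i ∈ posRoots b ∧ P.root i ∈ span ℤ (P.root '' I) := by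
  classical exact mem_filter

lemma leviPosRoots_subset_posRoots : leviPosRoots b I ⊆ posRoots b := fun _ hi ↦
  (mem_leviPosRoots.1 hi).1

lemma self_notMem_upperString (hI : I ⊆ b.support) (hi : i ∈ b.support) (hiI : i ∉ I)
    (hj : j ∈ leviPosRoots b I) : i ∉ upperString P i j := by
  intro h
  obtain ⟨m, -, hm⟩ := mem_upperString.1 h
  have hj' : P.root j = (1 - m : ℤ) • P.root i := by
    rw [sub_smul, one_zsmul, natCast_zsmul, eq_sub_iff_add_eq, ← hm]
  have hzero : (1 - m : ℤ) = 0 :=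
    eq_zero_of_zsmul_root_mem_span b hI hi hiI (hj' ▸ (mem_leviPosRoots.1 hj).2)
  exact P.ne_zero j (by rw [hj', hzero, zero_smul])

lemma pairwiseDisjoint_upperString (hI : I ⊆ b.support) (hi : i ∈ b.support) (hiI : i ∉ I) :
    (leviPosRoots b I : Set ι).PairwiseDisjoint (upperString P i) := by
  intro j hj j' hj' hne
  refine disjoint_left.2 fun k hk hk' ↦ hne ?_
  obtain ⟨m, -, hm⟩ := mem_upperString.1 hk
  obtain ⟨m', -, hm'⟩ := mem_upperString.1 hk'
  have hdiff : (m - m' : ℤ) • P.root i = P.root j' - P.root j := by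
    rw [sub_smul, natCast_zsmul, natCast_zsmul, sub_eq_sub_iff_add_eq_add, add_comm, ← hm, hm']
  have hzero : (m - m' : ℤ) = 0 := eq_zero_of_zsmul_root_mem_span b hI hi hiI <| hdiff ▸
    sub_mem (mem_leviPosRoots.1 hj').2 (mem_leviPosRoots.1 hj).2
  rw [hzero, zero_smul, eq_comm, sub_eq_zero] at hdiff
  exact (P.root.injective hdiff).symm

lemma linearIndependent_of_mem_leviPosRoots [P.IsReduced] (hI : I ⊆ b.support)
    (hi : i ∈ b.support) (hiI : i ∉ I) (hj : j ∈ leviPosRoots b I) :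
    LinearIndependent R ![P.root i, P.root j] := by
  have hjI := (mem_leviPosRoots.1 hj).2
  have hiI' := root_notMem_span b hI hi hiI
  refine RootPairing.IsReduced.linearIndependent P ?_ fun hneg ↦ ?_
  · rintro rfl
    exact hiI' hjI
  · exact hiI' (hneg ▸ neg_mem hjI)

section InsertSdiff

variable [DecidableEq ι]

lemma mem_leviPosRoots_insert_sdiff (hI : I ⊆ b.support) (hi : i ∈ b.support) (hiI : i ∉ I) :
    i ∈ leviPosRoots b (insert i I) \ leviPosRoots b I := by
  refine mem_sdiff.2 ⟨mem_leviPosRoots.2 ⟨mem_posRoots.2 (b.isPos_of_mem_support hi),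
    subset_span (Set.mem_image_of_mem _ (mem_insert_self i I))⟩, fun h ↦ ?_⟩
  exact root_notMem_span b hI hi hiI (mem_leviPosRoots.1 h).2

lemma pairwiseDisjoint_leviPosRoots_insert_sdiff (hI : I ⊆ b.support) :
    (↑(b.support \ I) : Set ι).PairwiseDisjoint
      fun i ↦ leviPosRoots b (insert i I) \ leviPosRoots b I := by
  intro i hi i' hi' hne
  obtain ⟨hib, hiI⟩ := mem_sdiff.1 hi
  have hI' : insert i' I ⊆ b.support := insert_subset (mem_sdiff.1 hi').1 hI
  have hi'I : i ∉ insert i' I := by simp [hne, hiI]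
  refine disjoint_left.2 fun k hk hk' ↦ (mem_sdiff.1 hk).2 <| mem_leviPosRoots.2 ?_
  obtain ⟨hkpos, hki⟩ := mem_leviPosRoots.1 (mem_sdiff.1 hk).1
  obtain ⟨-, hki'⟩ := mem_leviPosRoots.1 (mem_sdiff.1 hk').1
  rw [coe_insert, Set.image_insert_eq, mem_span_insert] at hki
  obtain ⟨z, y, hy, hk_eq⟩ := hki
  have hy' : y ∈ span ℤ (P.root '' ↑(insert i' I)) :=
    span_mono (Set.image_mono <| coe_subset.2 <| subset_insert i' I) hy
  have hz : z = 0 := eq_zero_of_zsmul_root_mem_span b hI' hib hi'I <|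
    eq_sub_of_add_eq hk_eq.symm ▸ sub_mem hki' hy'
  rw [hz, zero_smul, zero_add] at hk_eq
  exact ⟨hkpos, hk_eq ▸ hy⟩

lemma sum_card_leviPosRoots_insert_sdiff_le (hI : I ⊆ b.support) :
    ∑ i ∈ b.support \ I, #(leviPosRoots b (insert i I) \ leviPosRoots b I) ≤
      #(posRoots b \ leviPosRoots b I) := by
  rw [← card_biUnion (pairwiseDisjoint_leviPosRoots_insert_sdiff hI)]
  exact card_le_card <| biUnion_subset.2 fun i _ ↦
    sdiff_subset_sdiff leviPosRoots_subset_posRoots subset_rfl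

end InsertSdiff

variable [IsDomain R] [P.IsCrystallographic] [P.IsReduced]

lemma sum_pairingIn_posRoots (hi : i ∈ b.support) :
    ∑ j ∈ posRoots b, P.pairingIn ℤ j i = 2 := by
  classical
  have hipos : i ∈ posRoots b := mem_posRoots.2 (b.isPos_of_mem_support hi)
  have hneg (j : ι) : P.pairingIn ℤ (P.reflectionPerm i j) i = -P.pairingIn ℤ j i := by
    rw [← P.pairingIn_reflectionPerm, P.pairingIn_reflectionPerm_self_right]
  have herase : ∑ j ∈ (posRoots b).erase i, P.pairingIn ℤ j i = 0 := by
    refine sum_involution (fun j _ ↦ P.reflectionPerm i j) (fun j _ ↦ ?_) (fun j _ hne hfix ↦ ?_)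
      (fun j hj ↦ ?_) fun j _ ↦ P.reflectionPerm_self i j
    · rw [hneg, add_neg_cancel]
    · exact hne (self_eq_neg.1 (by rw [← hneg, hfix]))
    · obtain ⟨hji, hjpos⟩ := mem_erase.1 hj
      refine mem_erase.2 ⟨?_, mem_posRoots.2 <| (mem_posRoots.1 hjpos).reflectionPerm hi hji⟩
      rw [Ne, ← (P.reflectionPerm i).apply_eq_iff_eq, P.reflectionPerm_self]
      rintro rfl
      let := P.indexNeg
      exact (RootPairing.Base.IsPos.neg_iff_not b i).1 (mem_posRoots.1 hjpos) (mem_posRoots.1 hipos)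
  rw [← add_sum_erase _ _ hipos, herase, P.pairingIn_same ℤ i, add_zero]

variable [DecidableEq ι]

lemma upperString_subset_leviPosRoots_insert_sdiff (hI : I ⊆ b.support)
    (hi : i ∈ b.support) (hiI : i ∉ I) (hj : j ∈ leviPosRoots b I) :
    upperString P i j ⊆ leviPosRoots b (insert i I) \ leviPosRoots b I := by
  intro k hk
  obtain ⟨m, hm, hk_eq⟩ := mem_upperString.1 hk
  rw [← natCast_zsmul] at hk_eq
  obtain ⟨hjpos, hjI⟩ := mem_leviPosRoots.1 hj
  have hji : j ≠ i := by
    rintro rfl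
    exact root_notMem_span b hI hi hiI hjI
  have hkpos : b.IsPos k := (mem_posRoots.1 hjpos).add_zsmul hji hi hk_eq
  have hk_insert : P.root k ∈ span ℤ (P.root '' ↑(insert i I)) := by
    rw [coe_insert, Set.image_insert_eq, mem_span_insert]
    exact ⟨m, P.root j, hjI, by rw [hk_eq, add_comm]⟩
  refine mem_sdiff.2 ⟨mem_leviPosRoots.2 ⟨mem_posRoots.2 hkpos, hk_insert⟩, fun hkI ↦ ?_⟩
  have hzero : (m : ℤ) = 0 := eq_zero_of_zsmul_root_mem_span b hI hi hiI <|
    eq_sub_of_add_eq' hk_eq.symm ▸ sub_mem (mem_leviPosRoots.1 hkI).2 hjI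
  lia

lemma one_add_sum_card_upperString_le (hI : I ⊆ b.support) (hi : i ∈ b.support) (hiI : i ∉ I) :
    1 + ∑ j ∈ leviPosRoots b I, #(upperString P i j) ≤
      #(leviPosRoots b (insert i I) \ leviPosRoots b I) := by
  have hi_notMem : i ∉ (leviPosRoots b I).biUnion (upperString P i) := by
    simp only [mem_biUnion, not_exists, not_and]
    exact fun j hj ↦ self_notMem_upperString hI hi hiI hj
  rw [← card_biUnion (pairwiseDisjoint_upperString hI hi hiI), add_comm,
    ← card_insert_of_notMem hi_notMem]
  exact card_le_card <| insert_subset (mem_leviPosRoots_insert_sdiff hI hi hiI) <|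
    biUnion_subset.2 fun j hj ↦
      upperString_subset_leviPosRoots_insert_sdiff hI hi hiI hj

lemma sum_pairingIn_sub_one_le (hI : I ⊆ b.support) (hi : i ∈ b.support) (hiI : i ∉ I) :
    ∑ j ∈ posRoots b \ leviPosRoots b I, P.pairingIn ℤ j i - 1 ≤
      #(leviPosRoots b (insert i I) \ leviPosRoots b I) := by
  have hstrings : -∑ j ∈ leviPosRoots b I, P.pairingIn ℤ j i ≤
      ∑ j ∈ leviPosRoots b I, (#(upperString P i j) : ℤ) := by
    rw [← sum_neg_distrib]
    exact sum_le_sum fun j hj ↦ neg_pairingIn_le_card_upperString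
      (linearIndependent_of_mem_leviPosRoots hI hi hiI hj)
  have hcard := one_add_sum_card_upperString_le hI hi hiI
  have hsum := sum_sdiff (f := (P.pairingIn ℤ · i)) (leviPosRoots_subset_posRoots (b := b) (I := I))
  rw [sum_pairingIn_posRoots hi] at hsum
  zify at hcard
  linarith

theorem stmt7_general (b : P.Base) {I : Finset ι} (hI : I ⊆ b.support) :
    ∑ i ∈ b.support \ I, ∑ j ∈ posRoots b \ leviPosRoots b I, P.pairingIn ℤ j i ≤
      #(b.support \ I) + #(posRoots b \ leviPosRoots b I) := by
  have hsum : ∑ i ∈ b.support \ I,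
      (∑ j ∈ posRoots b \ leviPosRoots b I, P.pairingIn ℤ j i - 1) ≤
      ∑ i ∈ b.support \ I, (#(leviPosRoots b (insert i I) \ leviPosRoots b I) : ℤ) :=
    sum_le_sum fun i hi ↦ sum_pairingIn_sub_one_le hI (mem_sdiff.1 hi).1 (mem_sdiff.1 hi).2
  have hcard := sum_card_leviPosRoots_insert_sdiff_le (b := b) hI
  rw [sum_sub_distrib, sum_const, nsmul_one] at hsum
  zify at hcard
  linarith

end PositiveRoots

end RootPairing

lemma mem_span_nat_finset_iff (A : Type*) {M : Type*} [Semiring A] [AddCommMonoid M] [Module A M]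
    {s : Finset M} {x : M} :
    x ∈ span ℕ (s : Set M) ↔ ∃ c : M → ℕ, x = ∑ a ∈ s, (c a : A) • a := by
  rw [← Set.image_id (s : Set M), mem_span_image_finset_iff_exists_fun']
  simp only [id, Nat.cast_smul_eq_nsmul, eq_comm]

section Euclidean

variable {n : ℕ}

lemma corootPairing_self {α : Fin n → ℝ} (hα : α ≠ 0) : corootPairing n α α = 2 :=
  mul_div_cancel_right₀ 2 (dotProduct_self_eq_zero.not.2 hα)

/-- The coroot of `α` as the linear functional `⟨·, α̌⟩`; it is `0` for `α = 0`. -/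
noncomputable def corootFunctional (α : Fin n → ℝ) : Dual ℝ (Fin n → ℝ) where
  toFun β := corootPairing n β α
  map_add' β γ := by
    simp only [corootPairing, Pi.add_apply, add_mul, sum_add_distrib, mul_add, add_div]
  map_smul' t β := by
    simp only [corootPairing, Pi.smul_apply, smul_eq_mul, RingHom.id_apply, mul_assoc, ← mul_sum]
    ring

lemma dotProduct_eq_of_corootPairing_eq_two {α β : Fin n → ℝ} (hα : α ≠ 0)
    (hβα : corootPairing n β α = 2) : β ⬝ᵥ α = α ⬝ᵥ α :=
  mul_left_cancel₀ two_ne_zero ((div_eq_iff (dotProduct_self_eq_zero.not.2 hα)).1 hβα)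

lemma eq_of_corootPairing_eq_two {α β : Fin n → ℝ} (hα : α ≠ 0) (hβ : β ≠ 0)
    (hαβ : corootPairing n α β = 2) (hβα : corootPairing n β α = 2) : α = β := by
  have hα' := dotProduct_eq_of_corootPairing_eq_two hα hβα
  have hβ' := dotProduct_eq_of_corootPairing_eq_two hβ hαβ
  rw [← sub_eq_zero, ← dotProduct_self_eq_zero, sub_dotProduct, dotProduct_sub, dotProduct_sub,
    hα', hβ', sub_self]

variable {R : Finset (Fin n → ℝ)}

/-- The finite set `R`, indexed by its own elements, as a root pairing over `ℝ`. The ambient space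
is the span of `R` rather than `ℝⁿ`, so that the crystallographic case is a root system. -/
noncomputable def euclideanRootPairing (hR0 : (0 : Fin n → ℝ) ∉ R)
    (hrefl : ∀ α ∈ R, ∀ β ∈ R, β - corootPairing n β α • α ∈ R) :
    RootPairing R ℝ (span ℝ (R : Set (Fin n → ℝ))) (Dual ℝ (span ℝ (R : Set (Fin n → ℝ)))) :=
  .mk'' (Dual.eval ℝ _)
    (Subtype.impEmbedding _ _ fun _ ↦ mem_span_of_mem)
    { toFun α := (corootFunctional α).domRestrict _
      inj' α β h := by
        have hne (γ : R) : (γ : Fin n → ℝ) ≠ 0 := ne_of_mem_of_not_mem γ.2 hR0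
        have happly (γ : R) : corootPairing n γ α = corootPairing n γ β :=
          LinearMap.congr_fun h ⟨γ, mem_span_of_mem γ.2⟩
        refine Subtype.ext (eq_of_corootPairing_eq_two (hne α) (hne β) ?_ ?_)
        · rw [← happly α, corootPairing_self (hne α)]
        · rw [happly β, corootPairing_self (hne β)] }
    (fun α ↦ corootPairing_self (ne_of_mem_of_not_mem α.2 hR0))
    (by
      rintro α - ⟨β, rfl⟩
      exact ⟨⟨_, hrefl α α.2 β β.2⟩, rfl⟩)
    (by
      refine (congrArg (span ℝ) ?_).trans
        (span_span_coe_preimage (R := ℝ) (s := (R : Set (Fin n → ℝ))))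
      ext x
      exact ⟨fun ⟨α, h⟩ ↦ h ▸ α.2, fun h ↦ ⟨⟨x, h⟩, rfl⟩⟩)

variable (hR0 : (0 : Fin n → ℝ) ∉ R)
  (hrefl : ∀ α ∈ R, ∀ β ∈ R, β - corootPairing n β α • α ∈ R)

lemma coe_euclideanRootPairing_root (α : R) :
    ((euclideanRootPairing hR0 hrefl).root α : Fin n → ℝ) = α :=
  rfl

lemma euclideanRootPairing_pairing (α β : R) :
    (euclideanRootPairing hR0 hrefl).pairing β α = corootPairing n β α :=
  rfl

lemma coe_image_euclideanRootPairing_root {T : Finset (Fin n → ℝ)} (hT : T ⊆ R) :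
    Subtype.val '' ((euclideanRootPairing hR0 hrefl).root '' T.subtype (· ∈ R)) =
      (T : Set (Fin n → ℝ)) := by
  conv_rhs => rw [← Finset.subtype_map_of_mem hT, coe_map]
  exact Set.image_image ..

variable {hR0 hrefl} in
lemma mem_span_image_root_iff (A : Type*) [Semiring A] [Module A ℝ] [IsScalarTower A ℝ ℝ]
    {T : Finset (Fin n → ℝ)} (hT : T ⊆ R) {x : span ℝ (R : Set (Fin n → ℝ))} :
    x ∈ span A ((euclideanRootPairing hR0 hrefl).root '' T.subtype (· ∈ R)) ↔
      (x : Fin n → ℝ) ∈ span A (T : Set (Fin n → ℝ)) := by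
  rw [← coe_image_euclideanRootPairing_root hR0 hrefl hT]
  exact (apply_mem_span_image_iff_mem_span
    (f := (span ℝ (R : Set (Fin n → ℝ))).subtype.restrictScalars A) Subtype.val_injective).symm

section Crystallographic

variable (hcrys : ∀ α ∈ R, ∀ β ∈ R, ∃ m : ℤ, (m : ℝ) = corootPairing n β α)
include hcrys

lemma isCrystallographic_euclideanRootPairing :
    (euclideanRootPairing hR0 hrefl).IsCrystallographic :=
  ⟨fun α β ↦ hcrys β β.2 α α.2⟩

lemma isRootSystem_euclideanRootPairing :
    (euclideanRootPairing hR0 hrefl).IsRootSystem :=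
  RootPairing.isRootSystem_mk'' fun α β ↦ hcrys β β.2 α α.2

end Crystallographic

lemma isReduced_euclideanRootPairing
    (hred : ∀ α ∈ R, ∀ t : ℝ, t • α ∈ R → t = 1 ∨ t = -1) :
    (euclideanRootPairing hR0 hrefl).IsReduced where
  eq_or_eq_neg α β h := by
    rw [LinearIndependent.pair_iff' ((euclideanRootPairing hR0 hrefl).ne_zero α)] at h
    push Not at h
    obtain ⟨t, ht⟩ := h
    have hcoe : t • (α : Fin n → ℝ) = β := congrArg Subtype.val ht
    obtain rfl | rfl := hred α α.2 t (hcoe ▸ β.2)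
    · exact .inl (by rw [← ht, one_smul])
    · exact .inr (by rw [← ht, neg_smul, one_smul, neg_neg])

lemma exists_base_support_eq [(euclideanRootPairing hR0 hrefl).IsRootSystem]
    [(euclideanRootPairing hR0 hrefl).IsCrystallographic]
    [(euclideanRootPairing hR0 hrefl).IsReduced]
    {S : Finset (Fin n → ℝ)} (hSR : S ⊆ R) (hli : LinearIndepOn ℝ id (S : Set (Fin n → ℝ)))
    (hspan : ∀ β ∈ R, β ∈ span ℕ (S : Set (Fin n → ℝ)) ∨ -β ∈ span ℕ (S : Set (Fin n → ℝ))) :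
    ∃ b : (euclideanRootPairing hR0 hrefl).Base, b.support = S.subtype (· ∈ R) := by
  set P := euclideanRootPairing hR0 hrefl
  have hli' : LinearIndepOn ℝ P.root (S.subtype (· ∈ R)) := by
    refine LinearIndependent.of_comp (span ℝ (R : Set (Fin n → ℝ))).subtype ?_
    exact hli.comp (fun α : S.subtype (· ∈ R) ↦ ⟨α, mem_subtype.1 α.2⟩) fun _ _ h ↦
      Subtype.ext (Subtype.ext (Subtype.mk.inj h))
  have hclosure (β : R) : P.root β ∈ AddSubmonoid.closure (P.root '' S.subtype (· ∈ R)) ∨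
      -P.root β ∈ AddSubmonoid.closure (P.root '' S.subtype (· ∈ R)) := by
    rw [← span_nat_eq_addSubmonoidClosure, mem_toAddSubmonoid, mem_toAddSubmonoid,
      mem_span_image_root_iff ℕ hSR, mem_span_image_root_iff ℕ hSR]
    exact hspan β β.2
  exact ⟨.mk' P (S.subtype (· ∈ R)) hli' hclosure, coe_injective (Set.Finite.coe_toFinset _)⟩

section PositiveRoots

variable {hR0 hrefl} {S T : Finset (Fin n → ℝ)} {b : (euclideanRootPairing hR0 hrefl).Base}

lemma mem_map_posRoots (hSR : S ⊆ R) (hb : b.support = S.subtype (· ∈ R)) {β : Fin n → ℝ} :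
    β ∈ (posRoots b).map (.subtype _) ↔ β ∈ R ∧ β ∈ span ℕ (S : Set (Fin n → ℝ)) := by
  simp only [Finset.mem_map, mem_posRoots, isPos_iff_root_mem_span, hb,
    mem_span_image_root_iff ℕ hSR, coe_euclideanRootPairing_root,
    Function.Embedding.subtype_apply, Subtype.exists, exists_prop]
  exact ⟨fun ⟨_, hα, hαS, h⟩ ↦ h ▸ ⟨hα, hαS⟩, fun ⟨hβ, hβS⟩ ↦ ⟨β, hβ, hβS, rfl⟩⟩

lemma mem_map_leviPosRoots (hTR : T ⊆ R) {β : Fin n → ℝ} :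
    β ∈ (leviPosRoots b (T.subtype (· ∈ R))).map (.subtype _) ↔
      β ∈ (posRoots b).map (.subtype _) ∧ β ∈ span ℤ (T : Set (Fin n → ℝ)) := by
  simp only [Finset.mem_map, mem_leviPosRoots, mem_span_image_root_iff ℤ hTR,
    coe_euclideanRootPairing_root, Function.Embedding.subtype_apply]
  constructor
  · rintro ⟨α, ⟨hα, hαT⟩, rfl⟩
    exact ⟨⟨α, hα, rfl⟩, hαT⟩
  · rintro ⟨⟨α, hα, rfl⟩, hαT⟩
    exact ⟨α, ⟨hα, hαT⟩, rfl⟩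

end PositiveRoots

end Euclidean

/-- Lemma 4.9 (lem3).  Let `R` be a finite reduced crystallographic root system
(realized in `ℝⁿ` with the standard inner product) with base `S` and positive roots
`Rpos`, and for `I ⊆ S` let `RposI` be the positive roots that are integer linear
combinations of elements of `I`.  Then
`Σ_{α ∈ S∖I} Σ_{β ∈ R⁺∖R_I⁺} ⟨β, α̌⟩ ≤ #(S∖I) + #(R⁺∖R_I⁺)`. -/
theorem stmt7 (n : ℕ)
    (R : Finset (Fin n → ℝ)) (hR0 : (0 : Fin n → ℝ) ∉ R)
    (hred : ∀ α ∈ R, ∀ t : ℝ, t • α ∈ R → t = 1 ∨ t = -1)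
    (hcrys : ∀ α ∈ R, ∀ β ∈ R, ∃ m : ℤ, (m : ℝ) = corootPairing n β α)
    (hrefl : ∀ α ∈ R, ∀ β ∈ R, β - corootPairing n β α • α ∈ R)
    (S : Finset (Fin n → ℝ)) (hSR : S ⊆ R)
    (hli : LinearIndependent ℝ (fun x : {x : Fin n → ℝ // x ∈ S} => x.val))
    (Rpos : Finset (Fin n → ℝ))
    (hRpos : ∀ β, β ∈ Rpos ↔
      β ∈ R ∧ ∃ c : (Fin n → ℝ) → ℕ, β = ∑ α ∈ S, (c α : ℝ) • α)
    (hbase : ∀ β ∈ R, β ∈ Rpos ∨ -β ∈ Rpos)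
    (I : Finset (Fin n → ℝ)) (hI : I ⊆ S)
    (RposI : Finset (Fin n → ℝ))
    (hRposI : ∀ β, β ∈ RposI ↔
      β ∈ Rpos ∧ β ∈ Submodule.span ℤ (I : Set (Fin n → ℝ))) :
    ∑ α ∈ S \ I, ∑ β ∈ Rpos \ RposI, corootPairing n β α ≤
      ((S \ I).card : ℝ) + ((Rpos \ RposI).card : ℝ) := by
  have := isRootSystem_euclideanRootPairing hR0 hrefl hcrys
  have := isCrystallographic_euclideanRootPairing hR0 hrefl hcrys
  have := isReduced_euclideanRootPairing hR0 hrefl hred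
  simp only [← mem_span_nat_finset_iff ℝ] at hRpos
  obtain ⟨b, hb⟩ := exists_base_support_eq hR0 hrefl hSR hli fun β hβ ↦
    (hbase β hβ).imp (fun h ↦ ((hRpos _).1 h).2) fun h ↦ ((hRpos _).1 h).2
  have hIb : I.subtype (· ∈ R) ⊆ b.support := hb ▸ subtype_mono hI
  have hsimple : S \ I = (b.support \ I.subtype (· ∈ R)).map (.subtype _) := by
    rw [Finset.map_sdiff, hb, subtype_map_of_mem hSR, subtype_map_of_mem (hI.trans hSR)]
  have hpos : Rpos = (posRoots b).map (.subtype _) :=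
    ext fun _ ↦ (hRpos _).trans (mem_map_posRoots hSR hb).symm
  have hlevi : RposI = (leviPosRoots b (I.subtype (· ∈ R))).map (.subtype _) :=
    ext fun _ ↦ (hRposI _).trans (hpos ▸ (mem_map_leviPosRoots (hI.trans hSR)).symm)
  rw [hsimple, hpos, hlevi, ← Finset.map_sdiff, sum_map, card_map, card_map]
  simp only [sum_map, Function.Embedding.subtype_apply, ← euclideanRootPairing_pairing hR0 hrefl,
    ← (euclideanRootPairing hR0 hrefl).algebraMap_pairingIn ℤ, eq_intCast]
  exact_mod_cast stmt7_general b hIb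
end

section
/- Let n be a natural number, I a nonempty finite index set, m : I → ℝ with m_i > 0 for all i ∈ I, V a finite set, and f : I × V → ℤ a function such that: (i) f(i,u) ≥ −1 for all i ∈ I and u ∈ V; (ii) Σ_{i∈I} m_i·f(i,u) = 0 for every u ∈ V; (iii) for every i ∈ I, the number of u ∈ V with f(i,u) = −1 is at most n, and the number of u ∈ V with f(i,u) = 0 is at most n. Then #V ≤ 3n. -/
/-!
Summing the relations `∑ i, m i * f i u = 0` over `u ∈ V` and exchanging the sums shows that the row
sums `∑ u ∈ V, f i u` have weighted total `0`, so some row sum is at most `0`. In such a row the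
entries `-1` must compensate the positive ones: an entry other than `-1` and `0` is at least `1`,
so each entry `-1` can balance at most one of them. This bounds `#V` by twice the number of
entries `-1` plus the number of entries `0` in that row.
-/

section

open scoped Finset

theorem exists_nonpos_of_sum_mul_nonpos {ι R : Type*} [Semiring R] [LinearOrder R]
    [IsStrictOrderedRing R] {s : Finset ι} {w a : ι → R} (hw : ∀ i ∈ s, 0 ≤ w i)
    (hw_pos : ∃ i ∈ s, 0 < w i) (h : ∑ i ∈ s, w i * a i ≤ 0) : ∃ i ∈ s, a i ≤ 0 := by
  by_contra! ha
  obtain ⟨j, hj, hwj⟩ := hw_pos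
  have hsum : 0 < ∑ i ∈ s, w i * a i :=
    Finset.sum_pos' (fun i hi ↦ mul_nonneg (hw i hi) (ha i hi).le) ⟨j, hj, mul_pos hwj (ha j hj)⟩
  exact hsum.not_ge h

theorem card_le_two_mul_card_add_card_add_sum {υ : Type*} {s : Finset υ} {g : υ → ℤ}
    (hg : ∀ u ∈ s, -1 ≤ g u) :
    (#s : ℤ) ≤ 2 * #{u ∈ s | g u = -1} + #{u ∈ s | g u = 0} + ∑ u ∈ s, g u := by
  have pointwise : ∀ u ∈ s,
      1 ≤ 2 * (if g u = -1 then 1 else 0) + (if g u = 0 then 1 else 0) + g u := by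
    intro u hu
    have := hg u hu
    split_ifs <;> lia
  calc (#s : ℤ) = ∑ u ∈ s, 1 := by simp
    _ ≤ ∑ u ∈ s, (2 * (if g u = -1 then 1 else 0) + (if g u = 0 then 1 else 0) + g u) :=
      Finset.sum_le_sum pointwise
    _ = 2 * #{u ∈ s | g u = -1} + #{u ∈ s | g u = 0} + ∑ u ∈ s, g u := by
      rw [Finset.sum_add_distrib, Finset.sum_add_distrib, ← Finset.mul_sum, Finset.sum_boole,
        Finset.sum_boole]

theorem stmt8_general {ι υ R : Type*} [Ring R] [LinearOrder R] [IsStrictOrderedRing R]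
    {I : Finset ι} {m : ι → R} (hm : ∀ i ∈ I, 0 ≤ m i) (hm_pos : ∃ i ∈ I, 0 < m i)
    {V : Finset υ} {f : ι → υ → ℤ} (hf : ∀ i ∈ I, ∀ u ∈ V, -1 ≤ f i u)
    (hmf : ∀ u ∈ V, ∑ i ∈ I, m i * (f i u : R) ≤ 0) :
    ∃ i ∈ I, #V ≤ 2 * #{u ∈ V | f i u = -1} + #{u ∈ V | f i u = 0} := by
  have weighted_sum : ∑ i ∈ I, m i * ((∑ u ∈ V, f i u : ℤ) : R) ≤ 0 :=
    calc ∑ i ∈ I, m i * ((∑ u ∈ V, f i u : ℤ) : R) = ∑ u ∈ V, ∑ i ∈ I, m i * (f i u : R) := by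
          simp only [Int.cast_sum, Finset.mul_sum]
          exact Finset.sum_comm
      _ ≤ 0 := Finset.sum_nonpos hmf
  obtain ⟨i, hi, row_sum⟩ := exists_nonpos_of_sum_mul_nonpos hm hm_pos weighted_sum
  have row_sum_nonpos : ∑ u ∈ V, f i u ≤ 0 := Int.cast_nonpos.mp row_sum
  have card_le := card_le_two_mul_card_add_card_add_sum (hf i hi)
  exact ⟨i, hi, by lia⟩

end

/-- The averaging lemma from Step 2 of the proof of Theorem 4.10.  Let `I` be a
nonempty finite index set, `m : I → ℝ` positive, `V` a finite set and
`f : I × V → ℤ` with: `f(i,u) ≥ -1` always; `Σᵢ mᵢ f(i,u) = 0` for every `u`; and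
for every `i` at most `n` elements `u` with `f(i,u) = -1` and at most `n` with
`f(i,u) = 0`.  Then `#V ≤ 3n`. -/
theorem stmt8 {ι υ : Type*} (n : ℕ)
    (I : Finset ι) (hI : I.Nonempty)
    (m : ι → ℝ) (hm : ∀ i ∈ I, 0 < m i)
    (V : Finset υ) (f : ι → υ → ℤ)
    (h1 : ∀ i ∈ I, ∀ u ∈ V, -1 ≤ f i u)
    (h2 : ∀ u ∈ V, ∑ i ∈ I, m i * (f i u : ℝ) = 0)
    (h3 : ∀ i ∈ I, (V.filter fun u => f i u = -1).card ≤ n ∧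
      (V.filter fun u => f i u = 0).card ≤ n) :
    V.card ≤ 3 * n := by
  obtain ⟨i, hi, hV⟩ := stmt8_general (fun i hi ↦ (hm i hi).le)
    (hI.imp fun i hi ↦ ⟨hi, hm i hi⟩) h1 (fun u hu ↦ (h2 u hu).le)
  obtain ⟨card_neg_one_le, card_zero_le⟩ := h3 i hi
  lia
end

section
/- Let n ≥ 1, let p₁,…,pₙ ∈ ℝⁿ be linearly independent vectors, and let a > 0 and V > 0 be real numbers with |det(p₁,…,pₙ)| ≥ 1/a. Let Q ⊆ ℝⁿ be a convex set with vol(Q) ≤ V that contains 0 and p₁,…,pₙ. Then every point u ∈ Q, written u = Σ_{i=1}^n c_i·p_i, satisfies |c_i| ≤ n!·a·V for every i; that is, Q is contained in the parallelepiped {Σ c_i p_i : |c_i| ≤ n!·a·V}. -/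
/-!
Replace `pᵢ` by `u = ∑ⱼ cⱼ pⱼ`. By multilinearity of the determinant this multiplies the volume of
the parallelepiped spanned by the `pⱼ` by `|cᵢ|`. The simplex spanned by `0` and the new vectors
has `1 / n!` of the resulting volume and lies in the convex set `Q`, so `|cᵢ| |det p| / n! ≤ vol Q`.

The volume of the simplex is bounded below through the cross-polytope `∑ |xᵢ| < 1`, of volume
`2ⁿ / n!`, which is covered by the `2ⁿ` reflected copies of the corner simplex.
-/

open MeasureTheory Measure Module Set
open scoped Nat ENNReal

section Simplex

variable {ι : Type*} [Fintype ι]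

variable (ι) in
/-- The corner simplex of `ℝ^ι`, the convex hull of `0` and the standard basis vectors. Its linear
images are the simplices with a vertex at the origin. -/
def cornerSimplex : Set (ι → ℝ) :=
  {x | 0 ≤ x ∧ ∑ i, x i ≤ 1}

theorem volume_abs_preimage_le (s : Set (ι → ℝ)) :
    volume ((|·|) ⁻¹' s) ≤ 2 ^ Fintype.card ι * volume s := by
  classical
  let reflection (ε : ι → ℤˣ) : (ι → ℝ) →ₗ[ℝ] ι → ℝ :=
    Matrix.toLin' (.diagonal fun i => ((ε i : ℤ) : ℝ))
  have volume_reflection (ε : ι → ℤˣ) : volume (reflection ε '' s) = volume s := by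
    have abs_sign (i : ι) : |((ε i : ℤ) : ℝ)| = 1 := by
      rcases Int.units_eq_one_or (ε i) with h | h <;> simp [h]
    simp [reflection, addHaar_image_linearMap, Finset.abs_prod, abs_sign]
  have cover : (|·|) ⁻¹' s ⊆ ⋃ ε, reflection ε '' s := fun x hx =>
    mem_iUnion.2 ⟨fun i => if 0 ≤ x i then 1 else -1, |x|, hx, by
      ext i
      rcases le_or_gt 0 (x i) with h | h
      · simp [reflection, Matrix.mulVec_diagonal, h, abs_of_nonneg]
      · simp [reflection, Matrix.mulVec_diagonal, h.not_ge, abs_of_neg h]⟩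
  calc volume ((|·|) ⁻¹' s)
      ≤ ∑ ε, volume (reflection ε '' s) :=
        (measure_mono cover).trans (measure_iUnion_fintype_le _ _)
    _ = 2 ^ Fintype.card ι * volume s := by simp [volume_reflection]

variable (ι) in
theorem factorial_mul_volume_crossPolytope :
    (Fintype.card ι)! * volume {x : ι → ℝ | ∑ i, |x i| < 1} = 2 ^ Fintype.card ι := by
  have h := volume_sum_rpow_lt_one ι le_rfl
  simp only [Real.rpow_one, div_one, one_add_one_eq_two, Real.Gamma_two, mul_one,
    Real.Gamma_nat_eq_factorial] at h
  rw [h, ENNReal.ofReal_div_of_pos (by positivity), ENNReal.ofReal_natCast,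
    ENNReal.mul_div_cancel (by positivity) (by finiteness)]
  simp

theorem one_le_factorial_mul_volume_cornerSimplex :
    1 ≤ (Fintype.card ι)! * volume (cornerSimplex ι) := by
  have crossPolytope_subset : {x : ι → ℝ | ∑ i, |x i| < 1} ⊆ (|·|) ⁻¹' cornerSimplex ι :=
    fun x hx => ⟨abs_nonneg x, le_of_lt hx⟩
  have h : 2 ^ Fintype.card ι * 1 ≤
      2 ^ Fintype.card ι * ((Fintype.card ι)! * volume (cornerSimplex ι)) :=
    calc 2 ^ Fintype.card ι * 1
        = (Fintype.card ι)! * volume {x : ι → ℝ | ∑ i, |x i| < 1} := by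
          rw [factorial_mul_volume_crossPolytope, mul_one]
      _ ≤ (Fintype.card ι)! * (2 ^ Fintype.card ι * volume (cornerSimplex ι)) := by
          gcongr
          exact (measure_mono crossPolytope_subset).trans (volume_abs_preimage_le _)
      _ = 2 ^ Fintype.card ι * ((Fintype.card ι)! * volume (cornerSimplex ι)) :=
          mul_left_comm _ _ _
  exact (ENNReal.mul_le_mul_iff_right (by positivity) (by finiteness)).1 h

theorem linearCombination_image_cornerSimplex_subset {E : Type*} [AddCommGroup E] [Module ℝ E]
    {Q : Set E} (hQ : Convex ℝ Q) (h0 : 0 ∈ Q) {v : ι → E} (hv : ∀ i, v i ∈ Q) :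
    Fintype.linearCombination ℝ v '' cornerSimplex ι ⊆ Q := by
  rintro _ ⟨x, ⟨hx, hx1⟩, rfl⟩
  have h := hQ.sum_mem (t := Finset.univ) (w := fun o : Option ι => o.elim (1 - ∑ i, x i) x)
    (z := fun o => o.elim 0 v) (by rintro (_ | i) _; exacts [sub_nonneg.2 hx1, hx i])
    (by simp [Fintype.sum_option]) (by rintro (_ | i) _ <;> simp [h0, hv])
  simpa [Fintype.sum_option, Fintype.linearCombination_apply] using h

end Simplex

section Parallelepiped

variable {ι E : Type*} [Fintype ι]

theorem volume_parallelepiped [DecidableEq ι] (p : ι → ι → ℝ) :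
    volume (parallelepiped p) = ENNReal.ofReal |(Matrix.of fun i j => p j i).det| := by
  have basisFun_addHaar : (Pi.basisFun ℝ ι).addHaar = volume := by
    rw [Basis.addHaar_def, Basis.parallelepiped_basisFun, addHaarMeasure_eq_volume_pi]
  rw [← basisFun_addHaar, addHaar_parallelepiped, Basis.det_apply]
  rfl

variable [NormedAddCommGroup E] [NormedSpace ℝ E] [FiniteDimensional ℝ E]
  [MeasurableSpace E] [BorelSpace E] (μ : Measure E) [μ.IsAddHaarMeasure]

theorem addHaar_linearCombination_image (hcard : Fintype.card ι = finrank ℝ E) (v : ι → E)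
    (s : Set (ι → ℝ)) :
    μ (Fintype.linearCombination ℝ v '' s) = μ (parallelepiped v) * volume s := by
  set L := Fintype.linearCombination ℝ v
  let e : E ≃L[ℝ] (ι → ℝ) := .ofFinrankEq (by simp [hcard])
  obtain ⟨c, hc⟩ : ∃ c : ℝ≥0∞, μ.map e = c • volume :=
    ⟨_, isAddLeftInvariant_eq_smul (μ.map e) volume⟩
  have image_eq (t : Set (ι → ℝ)) :
      μ (L '' t) = c * ENNReal.ofReal |(e.toLinearMap ∘ₗ L).det| * volume t :=
    calc μ (L '' t) = μ.map e ((e.toLinearMap ∘ₗ L) '' t) := by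
          have h := e.toHomeomorph.toMeasurableEquiv.map_apply (μ := μ) (e '' (L '' t))
          rw [LinearMap.coe_comp, image_comp]
          exact (congrArg μ (preimage_image_eq _ e.injective).symm).trans h.symm
      _ = c * ENNReal.ofReal |(e.toLinearMap ∘ₗ L).det| * volume t := by
          rw [hc, Measure.smul_apply, addHaar_image_linearMap, smul_eq_mul, mul_assoc]
  have image_unitCube : L '' Icc 0 1 = parallelepiped v := rfl
  have volume_unitCube : volume (Icc (0 : ι → ℝ) 1) = 1 := by simp [Real.volume_Icc_pi]
  rw [← image_unitCube, image_eq, image_eq, volume_unitCube, mul_one]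

theorem addHaar_parallelepiped_le_factorial_mul (hcard : Fintype.card ι = finrank ℝ E)
    {Q : Set E} (hQ : Convex ℝ Q) (h0 : 0 ∈ Q) {v : ι → E} (hv : ∀ i, v i ∈ Q) :
    μ (parallelepiped v) ≤ (Fintype.card ι)! * μ Q :=
  calc μ (parallelepiped v)
      ≤ μ (parallelepiped v) * ((Fintype.card ι)! * volume (cornerSimplex ι)) :=
        le_mul_of_one_le_right' one_le_factorial_mul_volume_cornerSimplex
    _ = (Fintype.card ι)! * μ (Fintype.linearCombination ℝ v '' cornerSimplex ι) := by
        rw [addHaar_linearCombination_image μ hcard, mul_left_comm]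
    _ ≤ (Fintype.card ι)! * μ Q := by
        gcongr
        exact linearCombination_image_cornerSimplex_subset hQ h0 hv

theorem addHaar_parallelepiped_update [DecidableEq ι] (hcard : Fintype.card ι = finrank ℝ E)
    (p : ι → E) (c : ι → ℝ) (i : ι) :
    μ (parallelepiped (Function.update p i (∑ j, c j • p j))) =
      ENNReal.ofReal |c i| * μ (parallelepiped p) := by
  let w : ι → ι → ℝ := Function.update (fun j => Pi.single j 1) i c
  have det_w : (Matrix.of fun j k => w k j).det = c i := by
    have h : Matrix.of (fun j k => w k j) = Matrix.updateCol 1 i c := by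
      ext j k
      simp [w, Matrix.updateCol_apply, Function.update_apply, Matrix.one_apply, Pi.single_apply,
        ite_apply]
    rw [h, ← Matrix.cramer_apply, Matrix.cramer_one, Module.End.one_apply]
  have image_w : Fintype.linearCombination ℝ p '' parallelepiped w =
      parallelepiped (Function.update p i (∑ j, c j • p j)) := by
    rw [image_parallelepiped, Function.comp_update]
    congr 2
    ext j
    simp
  rw [← image_w, addHaar_linearCombination_image μ hcard, volume_parallelepiped, det_w, mul_comm]

theorem ofReal_abs_mul_addHaar_parallelepiped_le (hcard : Fintype.card ι = finrank ℝ E)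
    {Q : Set E} (hQ : Convex ℝ Q) (h0 : 0 ∈ Q) {p : ι → E} (hp : ∀ i, p i ∈ Q)
    {c : ι → ℝ} (hu : ∑ j, c j • p j ∈ Q) (i : ι) :
    ENNReal.ofReal |c i| * μ (parallelepiped p) ≤ (Fintype.card ι)! * μ Q := by
  classical
  rw [← addHaar_parallelepiped_update μ hcard]
  refine addHaar_parallelepiped_le_factorial_mul μ hcard hQ h0 fun j => ?_
  rcases eq_or_ne j i with rfl | hj
  · simpa using hu
  · simpa [hj] using hp j

end Parallelepiped

theorem stmt10_general {ι E : Type*} [Fintype ι] [NormedAddCommGroup E] [NormedSpace ℝ E]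
    [FiniteDimensional ℝ E] [MeasurableSpace E] [BorelSpace E] (μ : Measure E)
    [μ.IsAddHaarMeasure] (hcard : Fintype.card ι = finrank ℝ E) (p : ι → E)
    {a V : ℝ} (ha : 0 < a) (hV : 0 ≤ V) (hvol_p : ENNReal.ofReal (1 / a) ≤ μ (parallelepiped p))
    {Q : Set E} (hQ : Convex ℝ Q) (hvol : μ Q ≤ ENNReal.ofReal V) (h0 : 0 ∈ Q)
    (hp : ∀ i, p i ∈ Q) {c : ι → ℝ} (hu : ∑ j, c j • p j ∈ Q) (i : ι) :
    |c i| ≤ (Fintype.card ι)! * a * V := by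
  have h : ENNReal.ofReal (|c i| * (1 / a)) ≤ ENNReal.ofReal ((Fintype.card ι)! * V) :=
    calc ENNReal.ofReal (|c i| * (1 / a))
        = ENNReal.ofReal |c i| * ENNReal.ofReal (1 / a) := ENNReal.ofReal_mul (abs_nonneg _)
      _ ≤ ENNReal.ofReal |c i| * μ (parallelepiped p) := by gcongr
      _ ≤ (Fintype.card ι)! * μ Q :=
          ofReal_abs_mul_addHaar_parallelepiped_le μ hcard hQ h0 hp hu i
      _ ≤ (Fintype.card ι)! * ENNReal.ofReal V := by gcongr
      _ = ENNReal.ofReal ((Fintype.card ι)! * V) := by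
          rw [ENNReal.ofReal_mul (by positivity), ENNReal.ofReal_natCast]
  rw [ENNReal.ofReal_le_ofReal_iff (by positivity), mul_one_div, div_le_iff₀ ha] at h
  linarith

/-- Claim inside the proof of Theorem 3.7.  Let `p₁,…,pₙ ∈ ℝⁿ` be linearly
independent with `|det(p₁,…,pₙ)| ≥ 1/a`, and let `Q ⊆ ℝⁿ` be a convex set of volume
at most `V` containing `0` and the `pᵢ`.  Then every `u ∈ Q`, written
`u = Σ cᵢ pᵢ`, satisfies `|cᵢ| ≤ n!·a·V` for every `i`. -/
theorem stmt10 (n : ℕ) (hn : 1 ≤ n)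
    (p : Fin n → (Fin n → ℝ)) (hli : LinearIndependent ℝ p)
    (a V : ℝ) (ha : 0 < a) (hV : 0 < V)
    (hdet : 1 / a ≤ |Matrix.det (Matrix.of fun i j => p j i)|)
    (Q : Set (Fin n → ℝ)) (hQconv : Convex ℝ Q)
    (hvol : MeasureTheory.volume Q ≤ ENNReal.ofReal V)
    (h0 : (0 : Fin n → ℝ) ∈ Q) (hp : ∀ i, p i ∈ Q) :
    ∀ u ∈ Q, ∀ c : Fin n → ℝ, u = ∑ i, c i • p i →
      ∀ i, |c i| ≤ (n.factorial : ℝ) * a * V := by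
  rintro _ hu c rfl i
  have hvol_p : ENNReal.ofReal (1 / a) ≤ volume (parallelepiped p) :=
    (ENNReal.ofReal_le_ofReal hdet).trans_eq (volume_parallelepiped p).symm
  simpa using stmt10_general volume (by simp) p ha hV.le hvol_p hQconv hvol h0 hp hu i
end
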